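/- Let F = X_{2,0}Y_1² + X_{1,1}Y_1Y_2 + X_{0,2}Y_2² and A_F = R/Ann_R(F), where R = K[x_{2,0}, x_{1,1}, x_{0,2}, y_1, y_2]. Let ℓ = a_{2,0}x_{2,0} + a_{1,1}x_{1,1} + a_{0,2}x_{0,2} ∈ [A_F]_1 with (a_{2,0}, a_{1,1}, a_{0,2}) ≠ (0,0,0). Then the Jordan type of ℓ in A_F is P_{ℓ,A_F} = (2⁴, 1⁴) if a_{1,1}² ≠ 4·a_{2,0}·a_{0,2}, and P_{ℓ,A_F} = (2³, 1⁶) if a_{1,1}² = 4·a_{2,0}·a_{0,2}. -/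

import Mathlib

open MvPolynomial

/-- The differential operator `∏_i ∂^{s i}/∂X_i^{s i}` acting on `K[X_i : i ∈ σ]`
(any order of composition gives the same operator, since partial derivatives commute). -/
noncomputable def diffOp {K : Type*} [CommSemiring K] {σ : Type*} [DecidableEq σ]
    (s : σ →₀ ℕ) : Module.End K (MvPolynomial σ K) :=
  (s.support.toList.map fun i =>
    ((MvPolynomial.pderiv i).toLinearMap : Module.End K (MvPolynomial σ K)) ^ s i).prod

/-- The apolarity (differentiation) action `f ∘ F` of a polynomial `f` on a polynomial `F`:
each variable of `f` acts as partial differentiation with respect to the corresponding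
variable of `F`. -/
noncomputable def diffAction {K : Type*} [CommSemiring K] {σ : Type*} [DecidableEq σ]
    (f F : MvPolynomial σ K) : MvPolynomial σ K :=
  ∑ s ∈ f.support, f.coeff s • diffOp s F

/-- The apolar annihilator ideal `Ann(F) = {f : f ∘ F = 0}`.  (This set is already an
ideal, so taking the ideal span does not change it.) -/
noncomputable def annIdeal {K : Type*} [CommSemiring K] {σ : Type*} [DecidableEq σ]
    (F : MvPolynomial σ K) : Ideal (MvPolynomial σ K) :=
  Ideal.span {f | diffAction f F = 0}

/-- The Perazzo threefold form `F = X_{2,0} Y_1² + X_{1,1} Y_1 Y_2 + X_{0,2} Y_2²`,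
with variables indexed by `Fin 5` as `x_{2,0}, x_{1,1}, x_{0,2}, y_1, y_2`. -/
noncomputable def toyPerazzoForm (K : Type*) [CommSemiring K] : MvPolynomial (Fin 5) K :=
  X 0 * X 3 ^ 2 + X 1 * X 3 * X 4 + X 2 * X 4 ^ 2

/-- The linear form `ℓ = a_{2,0} x_{2,0} + a_{1,1} x_{1,1} + a_{0,2} x_{0,2} + b_1 y_1 + b_2 y_2`. -/
noncomputable def toyLinForm {K : Type*} [CommSemiring K]
    (a20 a11 a02 b1 b2 : K) : MvPolynomial (Fin 5) K :=
  C a20 * X 0 + C a11 * X 1 + C a02 * X 2 + C b1 * X 3 + C b2 * X 4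

/-- The rank of the `k`-th power of the multiplication map `×ℓ : A → A`,
as a `K`-linear endomorphism. -/
noncomputable def rkPow {K A : Type*} [Field K] [CommRing A] [Algebra K A]
    (ℓ : A) (k : ℕ) : ℕ :=
  Module.finrank K (LinearMap.range ((LinearMap.mulLeft K ℓ) ^ k))

/-- `ℓ` has Jordan type (in the `K`-algebra `A`) given by the multiplicity function
`mult : ℕ → ℕ`: for every `k ≥ 1`, the number of Jordan blocks of size `k` of the
multiplication map `×ℓ` is `rank(×ℓ^{k-1}) - 2·rank(×ℓ^k) + rank(×ℓ^{k+1})`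
(written additively to avoid truncated subtraction). -/
def IsJordanTypeMult {K A : Type*} [Field K] [CommRing A] [Algebra K A]
    (ℓ : A) (mult : ℕ → ℕ) : Prop :=
  ∀ k : ℕ, 1 ≤ k → rkPow (K := K) ℓ (k - 1) + rkPow (K := K) ℓ (k + 1)
      = mult k + 2 * rkPow (K := K) ℓ k

section Helpers

variable {K : Type*} [Field K]

lemma exists_phi (K : Type*) [Field K] : ∃ Φ : MvPolynomial (Fin 5) K →ₐ[K] Module.End K (MvPolynomial (Fin 5) K),
    ∀ i, Φ (X i) = ((MvPolynomial.pderiv i).toLinearMap : Module.End K (MvPolynomial (Fin 5) K)) := by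
  let pd : Fin 5 → Module.End K (MvPolynomial (Fin 5) K) := fun i => (MvPolynomial.pderiv i).toLinearMap
  have hcomm : ∀ a ∈ Set.range pd, ∀ b ∈ Set.range pd, a * b = b * a := by
    rintro _ ⟨i, rfl⟩ _ ⟨j, rfl⟩
    refine LinearMap.ext fun f => ?_
    change pderiv i (pderiv j f) = pderiv j (pderiv i f)
    have : ⁅(pderiv i : Derivation K (MvPolynomial (Fin 5) K) (MvPolynomial (Fin 5) K)), (pderiv j : Derivation K (MvPolynomial (Fin 5) K) (MvPolynomial (Fin 5) K))⁆ = 0 := by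
      apply MvPolynomial.derivation_ext
      intro k
      simp [Derivation.commutator_apply, pderiv_X, Pi.single_apply]
      split_ifs <;> simp
    have h2 := congrArg (fun D => D f) this
    simpa [Derivation.commutator_apply, sub_eq_zero] using h2
  let _ := Algebra.adjoinCommRingOfComm K hcomm
  let Ψ : MvPolynomial (Fin 5) K →ₐ[K] Algebra.adjoin K (Set.range pd) :=
    aeval (fun i => (⟨pd i, Algebra.subset_adjoin ⟨i, rfl⟩⟩ : Algebra.adjoin K (Set.range pd)))
  refine ⟨(Algebra.adjoin K (Set.range pd)).val.comp Ψ, fun i => ?_⟩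
  simp [Ψ, pd]

noncomputable def PHI (K : Type*) [Field K] :
    MvPolynomial (Fin 5) K →ₐ[K] Module.End K (MvPolynomial (Fin 5) K) := (exists_phi K).choose

lemma PHI_X (i : Fin 5) (G : MvPolynomial (Fin 5) K) : PHI K (X i) G = pderiv i G := by
  rw [PHI, (exists_phi K).choose_spec]; rfl

lemma PHI_monomial (s : Fin 5 →₀ ℕ) : PHI K (monomial s 1) = diffOp s := by
  rw [monomial_eq, diffOp, Finsupp.prod, ← Finset.prod_map_toList]
  simp only [map_one, one_mul, map_list_prod, List.map_map]
  congr 2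
  funext i
  simp [PHI, (exists_phi K).choose_spec]

lemma diffAction_eq (f F : MvPolynomial (Fin 5) K) : diffAction f F = PHI K f F := by
  conv_rhs => rw [f.as_sum]
  rw [diffAction, map_sum, LinearMap.sum_apply]
  refine Finset.sum_congr rfl fun s _ => ?_
  have : monomial s (coeff s f) = coeff s f • monomial s (1 : K) := by simp [smul_monomial]
  rw [this, map_smul, PHI_monomial, LinearMap.smul_apply]

noncomputable def phiL (G : MvPolynomial (Fin 5) K) :
    MvPolynomial (Fin 5) K →ₗ[K] MvPolynomial (Fin 5) K :=
  (LinearMap.applyₗ G).comp (PHI K).toLinearMap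

lemma phiL_apply (f G : MvPolynomial (Fin 5) K) : phiL G f = PHI K f G := rfl

lemma mem_ann (f F : MvPolynomial (Fin 5) K) : f ∈ annIdeal F ↔ PHI K f F = 0 := by
  constructor
  · intro h
    refine Submodule.span_induction (p := fun f _ => PHI K f F = 0) ?_ ?_ ?_ ?_ h
    · intro x hx
      rw [← diffAction_eq]; exact hx
    · simp
    · intro x y _ _ hx hy
      simp [hx, hy]
    · intro a x _ hx
      simp [hx]
  · intro h
    exact Ideal.subset_span (by rw [Set.mem_ofPred_eq, diffAction_eq, h])

lemma rkPow_eq (F l : MvPolynomial (Fin 5) K) (k : ℕ) :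
    rkPow (K := K) (Ideal.Quotient.mk (annIdeal F) l) k
      = Module.finrank K (LinearMap.range (phiL (PHI K (l ^ k) F))) := by
  have hle : (annIdeal F).restrictScalars K ≤ LinearMap.ker (phiL F) := by
    intro f hf
    exact (mem_ann f F).1 hf
  let ψ : (MvPolynomial (Fin 5) K ⧸ annIdeal F) →ₗ[K] MvPolynomial (Fin 5) K :=
    (Submodule.liftQ ((annIdeal F).restrictScalars K) (phiL F) hle).comp
      (Submodule.Quotient.restrictScalarsEquiv K (annIdeal F)).symm.toLinearMap
  have hψ : ∀ f, ψ (Ideal.Quotient.mk (annIdeal F) f) = PHI K f F := fun f => rfl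
  have hinj : Function.Injective ψ := by
    rw [injective_iff_map_eq_zero]
    intro a ha
    obtain ⟨f, rfl⟩ := Ideal.Quotient.mk_surjective a
    rw [hψ] at ha
    exact Ideal.Quotient.eq_zero_iff_mem.2 ((mem_ann f F).2 ha)
  rw [rkPow, LinearMap.pow_mulLeft, (Submodule.equivMapOfInjective ψ hinj _).finrank_eq]
  have : Submodule.map ψ (LinearMap.range (LinearMap.mulLeft K ((Ideal.Quotient.mk (annIdeal F)) l ^ k))) = LinearMap.range (phiL (PHI K (l ^ k) F)) := by
    ext g
    simp only [Submodule.mem_map, LinearMap.mem_range, phiL_apply, LinearMap.mulLeft_apply]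
    constructor
    · rintro ⟨_, ⟨a, rfl⟩, rfl⟩
      obtain ⟨f, rfl⟩ := Ideal.Quotient.mk_surjective a
      refine ⟨f, ?_⟩
      rw [← map_pow, ← map_mul, hψ, mul_comm, map_mul]; rfl
    · rintro ⟨f, rfl⟩
      refine ⟨_, ⟨Ideal.Quotient.mk _ f, rfl⟩, ?_⟩
      rw [← map_pow, ← map_mul, hψ, mul_comm, map_mul]; rfl
  rw [this]

lemma range_le (G : MvPolynomial (Fin 5) K) (V : Submodule K (MvPolynomial (Fin 5) K))
    (hG : G ∈ V) (hV : ∀ i, ∀ v ∈ V, pderiv i v ∈ V) : LinearMap.range (phiL G) ≤ V := by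
  rintro _ ⟨f, rfl⟩
  rw [phiL_apply]
  induction f using MvPolynomial.induction_on with
  | C a => 
    rw [← algebraMap_eq, AlgHom.commutes]
    exact V.smul_mem a hG
  | add p q hp hq => rw [map_add]; exact V.add_mem hp hq
  | mul_X p i hp =>
    rw [mul_comm, map_mul]
    change PHI K (X i) (PHI K p G) ∈ V
    rw [PHI_X]; exact hV i _ hp

lemma self_mem (G : MvPolynomial (Fin 5) K) : G ∈ LinearMap.range (phiL G) :=
  ⟨1, by simp [phiL_apply]⟩

lemma pd_mem {G v : MvPolynomial (Fin 5) K} (i : Fin 5) (h : v ∈ LinearMap.range (phiL G)) :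
    pderiv i v ∈ LinearMap.range (phiL G) := by
  obtain ⟨f, rfl⟩ := h
  refine ⟨X i * f, ?_⟩
  rw [phiL_apply, map_mul]
  exact PHI_X i _

lemma range_eq_span {n : ℕ} (G : MvPolynomial (Fin 5) K) (v : Fin n → MvPolynomial (Fin 5) K)
    (hG : G ∈ Submodule.span K (Set.range v)) 
    (h1 : ∀ i j, pderiv i (v j) ∈ Submodule.span K (Set.range v))
    (h2 : ∀ j, v j ∈ LinearMap.range (phiL G))
    (hv : LinearIndependent K v) :
    Module.finrank K (LinearMap.range (phiL G)) = n := by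
  have : LinearMap.range (phiL G) = Submodule.span K (Set.range v) := by
    apply le_antisymm
    · apply range_le _ _ hG
      intro i w hw
      have : Submodule.span K (Set.range v) ≤ (Submodule.span K (Set.range v)).comap (pderiv i).toLinearMap := by
        rw [Submodule.span_le]
        rintro _ ⟨j, rfl⟩
        exact h1 i j
      exact this hw
    · rw [Submodule.span_le]
      rintro _ ⟨j, rfl⟩
      exact h2 j
  rw [this, finrank_span_eq_card hv, Fintype.card_fin]

lemma smul_mem_iff' {V : Submodule K (MvPolynomial (Fin 5) K)} {c : K} (hc : c ≠ 0)
    {v : MvPolynomial (Fin 5) K} (h : C c * v ∈ V) : v ∈ V := by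
  rw [← smul_eq_C_mul] at h
  exact (V.smul_mem_iff hc).1 h

noncomputable def fam (K : Type*) [Field K] : Fin 12 → MvPolynomial (Fin 5) K :=
  ![1, X 0, X 1, X 2, X 3, X 4, X 3 ^ 2, X 3 * X 4, X 4 ^ 2,
    2 * X 0 * X 3 + X 1 * X 4, X 1 * X 3 + 2 * X 2 * X 4,
    X 0 * X 3 ^ 2 + X 1 * X 3 * X 4 + X 2 * X 4 ^ 2]

lemma fam_indep [CharZero K] : LinearIndependent K (fam K) := by
  rw [Fintype.linearIndependent_iff]
  intro g hg
  have E : ∀ p : Fin 5 → K, _ := fun p => congrArg (eval p) hg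
  simp [Fin.sum_univ_succ, fam, smul_eval] at E
  have e0 := E ![0,0,0,0,0]
  have e1 := E ![1,0,0,0,0]
  have e2 := E ![0,1,0,0,0]
  have e3 := E ![0,0,1,0,0]
  have e4 := E ![0,0,0,1,0]
  have e4' := E ![0,0,0,-1,0]
  have e5 := E ![0,0,0,0,1]
  have e5' := E ![0,0,0,0,-1]
  have e6 := E ![0,0,0,1,1]
  have e7 := E ![1,0,0,1,0]
  have e8 := E ![1,0,0,-1,0]
  have e9 := E ![0,0,1,0,1]
  clear E hg
  simp at e0 e1 e2 e3 e4 e4' e5 e5' e6 e7 e8 e9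
  have h2 : (2 : K) ≠ 0 := two_ne_zero
  have g0 : g 0 = 0 := e0
  have g1 : g 1 = 0 := by linear_combination e1 - e0
  have g2 : g 2 = 0 := by linear_combination e2 - e0
  have g3 : g 3 = 0 := by linear_combination e3 - e0
  have g4 : g 4 = 0 := by linear_combination (e4 - e4') / 2
  have g5 : g 5 = 0 := by linear_combination (e5 - e5') / 2
  have g6 : g 6 = 0 := by linear_combination e4 - e0 - g4
  have g8 : g 8 = 0 := by linear_combination e5 - e0 - g5
  have g7 : g 7 = 0 := by linear_combination e6 - g0 - g4 - g5 - g6 - g8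
  have g9 : g 9 = 0 := by linear_combination (e7 - e8 - 2 * g4) / 4
  have g11 : g 11 = 0 := by linear_combination e7 - g0 - g1 - g4 - g6 - 2 * g9
  have g10 : g 10 = 0 := by linear_combination (e9 - g0 - g3 - g5 - g8 - g11) / 2
  intro i
  fin_cases i <;> assumption

lemma C2 : (C (2 : K) : MvPolynomial (Fin 5) K) = 2 := map_ofNat C 2

lemma C4 : (C (4 : K) : MvPolynomial (Fin 5) K) = 4 := map_ofNat C 4

lemma pd2 (i : Fin 5) : pderiv i (2 : MvPolynomial (Fin 5) K) = 0 := by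
  rw [← C2, pderiv_C]

set_option maxHeartbeats 2000000 in
lemma rk0 [CharZero K] : Module.finrank K (LinearMap.range (phiL (toyPerazzoForm K))) = 12 := by
  apply range_eq_span _ (fam K) _ _ _ fam_indep
  · exact Submodule.subset_span ⟨11, rfl⟩
  · have H : ∀ j, fam K j ∈ Submodule.span K (Set.range (fam K)) := fun j => Submodule.subset_span ⟨j, rfl⟩
    have H2 : ∀ j, 2 * fam K j ∈ Submodule.span K (Set.range (fam K)) := fun j => by
      rw [two_mul]; exact add_mem (H j) (H j)
    have t0 := H 0
    have t1 := H 1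
    have t2 := H 2
    have t3 := H 3
    have t4 := H 4
    have t5 := H 5
    have t6 := H 6
    have t7 := H 7
    have t8 := H 8
    have t9 := H 9
    have t10 := H 10
    have s1 := H2 1
    have s3 := H2 3
    have s4 := H2 4
    have s5 := H2 5
    clear H H2
    generalize Submodule.span K (Set.range (fam K)) = V at *
    simp only [fam, Matrix.cons_val] at t0 t1 t2 t3 t4 t5 t6 t7 t8 t9 t10 s1 s3 s4 s5
    have u7 : X 4 * X 3 ∈ V := by rwa [mul_comm] at t7
    have u9 : X 0 * (2 * X 3) + X 4 * X 1 ∈ V := by convert t9 using 1; ring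
    have u10 : X 1 * X 3 + X 2 * (2 * X 4) ∈ V := by convert t10 using 1; ring
    have u4 : X 3 * 2 ∈ V := by rwa [mul_comm] at s4
    have u5 : X 4 * 2 ∈ V := by rwa [mul_comm] at s5
    intro i j
    fin_cases i <;> fin_cases j <;>
      simp [fam, pderiv_X, t0, t1, t2, t3, t4, t5, t6, t7, t8, t9, t10, s1, s3, s4, s5, u4, u5, u7, u9, u10, pd2]
  · have t11 : toyPerazzoForm K ∈ _ := self_mem (toyPerazzoForm K)
    have t6 := pd_mem 0 t11
    have t7 := pd_mem 1 t11
    have t8 := pd_mem 2 t11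
    have t9 := pd_mem 3 t11
    have t10 := pd_mem 4 t11
    have t1 := pd_mem 3 t9
    have t2 := pd_mem 4 t9
    have t3 := pd_mem 4 t10
    have t4 := pd_mem 4 t7
    have t5 := pd_mem 3 t7
    have t0 := pd_mem 3 t4
    generalize LinearMap.range (phiL (toyPerazzoForm K)) = V at *
    have h2 : (2 : K) ≠ 0 := two_ne_zero
    intro j
    simp [toyPerazzoForm, pderiv_X, pd2] at t0 t1 t2 t3 t4 t5 t6 t7 t8 t9 t10 t11
    have u1 : X 0 ∈ V := smul_mem_iff' h2 (by rwa [C2, mul_comm])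
    have u3 : X 2 ∈ V := smul_mem_iff' h2 (by rwa [C2, mul_comm])
    have u7 : X 3 * X 4 ∈ V := by rwa [mul_comm] at t7
    have u9 : 2 * X 0 * X 3 + X 1 * X 4 ∈ V := by convert t9 using 1; ring
    have u10 : X 1 * X 3 + 2 * X 2 * X 4 ∈ V := by convert t10 using 1; ring
    fin_cases j <;> simp [fam, u1, u3, u7, u9, u10, t0, t1, t2, t3, t4, t5, t6, t7, t8, t9, t10, t11]

noncomputable def qf (a b c : K) : MvPolynomial (Fin 5) K :=
  C a * X 3 ^ 2 + C b * (X 3 * X 4) + C c * X 4 ^ 2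

lemma PHI_C (a : K) (G : MvPolynomial (Fin 5) K) : PHI K (C a) G = C a * G := by
  rw [← algebraMap_eq, AlgHom.commutes, algebraMap_eq, ← smul_eq_C_mul]; rfl

lemma PHI_lin (a b c : K) (G : MvPolynomial (Fin 5) K) :
    PHI K (toyLinForm a b c 0 0) G = C a * pderiv 0 G + C b * pderiv 1 G + C c * pderiv 2 G := by
  simp [toyLinForm, PHI_X, smul_eq_C_mul]

lemma PHI_one (a b c : K) :
    PHI K (toyLinForm a b c 0 0) (toyPerazzoForm K) = qf a b c := by
  rw [PHI_lin]
  simp [toyPerazzoForm, pderiv_X, qf, mul_comm]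

lemma PHI_two (a b c : K) (k : ℕ) :
    PHI K (toyLinForm a b c 0 0 ^ (k + 2)) (toyPerazzoForm K) = 0 := by
  rw [pow_add, pow_two, map_mul, map_mul]
  change PHI K (_ ^ k) (PHI K _ (PHI K _ _)) = 0
  rw [PHI_one, PHI_lin]
  simp [qf, pderiv_X]

lemma rk_two (a b c : K) (k : ℕ) :
    rkPow (K := K) (Ideal.Quotient.mk (annIdeal (toyPerazzoForm K)) (toyLinForm a b c 0 0)) (k + 2)
      = 0 := by
  rw [rkPow_eq, PHI_two]
  have : phiL (0 : MvPolynomial (Fin 5) K) = 0 := by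
    refine LinearMap.ext fun f => ?_
    simp [phiL_apply]
  rw [this, LinearMap.range_zero, finrank_bot]

lemma rk_zero [CharZero K] (a b c : K) :
    rkPow (K := K) (Ideal.Quotient.mk (annIdeal (toyPerazzoForm K)) (toyLinForm a b c 0 0)) 0
      = 12 := by
  rw [rkPow_eq, pow_zero, map_one]
  exact rk0

lemma rk_one_nd [CharZero K] (a b c : K) (ha : ¬(a = 0 ∧ b = 0 ∧ c = 0)) (h : b ^ 2 ≠ 4 * a * c) :
    Module.finrank K (LinearMap.range (phiL (qf a b c))) = 4 := by
  apply range_eq_span _ ![qf a b c, X 3, X 4, 1]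
  · exact Submodule.subset_span ⟨0, rfl⟩
  · have H : ∀ j, ![qf a b c, X 3, X 4, 1] j ∈ Submodule.span K (Set.range ![qf a b c, X 3, X 4, 1]) :=
      fun j => Submodule.subset_span ⟨j, rfl⟩
    have t0 := H 0
    have t1 := H 1
    have t2 := H 2
    have t3 := H 3
    clear H
    generalize Submodule.span K (Set.range ![qf a b c, X 3, X 4, 1]) = V at *
    simp only [Matrix.cons_val] at t0 t1 t2 t3
    have e3 : pderiv 3 (qf a b c) = (2 * a) • X 3 + b • X 4 := by
      simp [qf, pderiv_X, smul_eq_C_mul, C2, C4]; ring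
    have e4 : pderiv 4 (qf a b c) = b • X 3 + (2 * c) • X 4 := by
      simp [qf, pderiv_X, smul_eq_C_mul, C2, C4]; ring
    have m3 : pderiv 3 (qf a b c) ∈ V := by
      rw [e3]; exact V.add_mem (V.smul_mem _ t1) (V.smul_mem _ t2)
    have m4 : pderiv 4 (qf a b c) ∈ V := by
      rw [e4]; exact V.add_mem (V.smul_mem _ t1) (V.smul_mem _ t2)
    intro i j
    fin_cases j
    · fin_cases i
      · simp [qf, pderiv_X]
      · simp [qf, pderiv_X]
      · simp [qf, pderiv_X]
      · exact m3
      · exact m4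
    all_goals fin_cases i <;> simp [pderiv_X] <;> assumption
  · have t0 := self_mem (qf a b c)
    have t1 := pd_mem 3 t0
    have t2 := pd_mem 4 t0
    have P := @pd_mem K _ (qf a b c)
    generalize LinearMap.range (phiL (qf a b c)) = V at *
    have hd : 4 * a * c - b ^ 2 ≠ 0 := fun h' => h (by linear_combination -h')
    have m3 : X 3 ∈ V := by
      apply smul_mem_iff' hd
      have := V.sub_mem (V.smul_mem (2 * c) t1) (V.smul_mem b t2)
      convert this using 1
      simp [qf, pderiv_X, smul_eq_C_mul, C2, C4]; ring
    have m4 : X 4 ∈ V := by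
      apply smul_mem_iff' hd
      have := V.sub_mem (V.smul_mem (2 * a) t2) (V.smul_mem b t1)
      convert this using 1
      simp [qf, pderiv_X, smul_eq_C_mul, C2, C4]; ring
    have m1 := P 3 m3
    simp at m1
    intro j
    fin_cases j <;> simp <;> assumption
  · rw [Fintype.linearIndependent_iff]
    intro g hg
    have E : ∀ p : Fin 5 → K, _ := fun p => congrArg (eval p) hg
    simp [Fin.sum_univ_succ, qf, smul_eval] at E
    have e0 := E ![0,0,0,0,0]
    have e4 := E ![0,0,0,1,0]
    have e4' := E ![0,0,0,-1,0]
    have e5 := E ![0,0,0,0,1]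
    have e5' := E ![0,0,0,0,-1]
    have e6 := E ![0,0,0,1,1]
    clear E hg
    simp at e0 e4 e4' e5 e5' e6
    have g3 : g 3 = 0 := e0
    have g1 : g 1 = 0 := by linear_combination (e4 - e4') / 2
    have g2 : g 2 = 0 := by linear_combination (e5 - e5') / 2
    have ga : g 0 * a = 0 := by linear_combination e4 - g1 - g3
    have gc : g 0 * c = 0 := by linear_combination e5 - g2 - g3
    have gb : g 0 * b = 0 := by linear_combination e6 - g1 - g2 - g3 - ga - gc
    have g0 : g 0 = 0 := by
      by_contra hne
      exact ha ⟨by simpa [hne] using ga, by simpa [hne] using gb, by simpa [hne] using gc⟩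
    intro i
    fin_cases i <;> assumption

lemma rk_one_dg' [CharZero K] (c m n : K) (G : MvPolynomial (Fin 5) K)
    (hG : G = C c * (C m * X 3 + C n * X 4) ^ 2) (hc : c ≠ 0) (hmn : ¬ (m = 0 ∧ n = 0)) :
    Module.finrank K (LinearMap.range (phiL G)) = 3 := by
  have e0 : pderiv 0 G = 0 := by simp [hG, pderiv_X]
  have e1 : pderiv 1 G = 0 := by simp [hG, pderiv_X]
  have e2 : pderiv 2 G = 0 := by simp [hG, pderiv_X]
  have e3 : pderiv 3 G = C (2 * c * m) * (C m * X 3 + C n * X 4) := by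
    simp [hG, pderiv_X, C2]; ring
  have e4 : pderiv 4 G = C (2 * c * n) * (C m * X 3 + C n * X 4) := by
    simp [hG, pderiv_X, C2]; ring
  have h2 : (2 : K) ≠ 0 := two_ne_zero
  apply range_eq_span _ ![G, C m * X 3 + C n * X 4, 1]
  · exact Submodule.subset_span ⟨0, rfl⟩
  · have H : ∀ j, ![G, C m * X 3 + C n * X 4, 1] j ∈ Submodule.span K (Set.range ![G, C m * X 3 + C n * X 4, 1]) :=
      fun j => Submodule.subset_span ⟨j, rfl⟩
    have t1 := H 1
    have t2 := H 2
    clear H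
    generalize Submodule.span K (Set.range ![G, C m * X 3 + C n * X 4, 1]) = V at *
    simp only [Matrix.cons_val] at t1 t2
    have tC : ∀ x : K, C x ∈ V := fun x => by
      have := V.smul_mem x t2
      rwa [smul_eq_C_mul, mul_one] at this
    have tL : ∀ x : K, C x * (C m * X 3 + C n * X 4) ∈ V := fun x => by
      rw [← smul_eq_C_mul]; exact V.smul_mem x t1
    intro i j
    fin_cases j
    · fin_cases i
      · change pderiv 0 G ∈ V
        rw [e0]; exact V.zero_mem
      · change pderiv 1 G ∈ V
        rw [e1]; exact V.zero_mem
      · change pderiv 2 G ∈ V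
        rw [e2]; exact V.zero_mem
      · change pderiv 3 G ∈ V
        rw [e3]; exact tL _
      · change pderiv 4 G ∈ V
        rw [e4]; exact tL _
    all_goals fin_cases i <;> simp [pderiv_X, tC]
  · have t0 := self_mem G
    have t1 := pd_mem 3 t0
    have t2 := pd_mem 4 t0
    have P := @pd_mem K _ G
    generalize LinearMap.range (phiL G) = V at *
    have mL : C m * X 3 + C n * X 4 ∈ V := by
      rcases not_and_or.1 hmn with h | h
      · rw [e3] at t1
        exact smul_mem_iff' (by simp [hc, h]) t1
      · rw [e4] at t2
        exact smul_mem_iff' (by simp [hc, h]) t2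
    have m1 : (1 : MvPolynomial (Fin 5) K) ∈ V := by
      rcases not_and_or.1 hmn with h | h
      · apply smul_mem_iff' h
        simpa [pderiv_X] using P 3 mL
      · apply smul_mem_iff' h
        simpa [pderiv_X] using P 4 mL
    intro j
    fin_cases j <;> simp <;> assumption
  · rw [Fintype.linearIndependent_iff]
    intro g hg
    obtain ⟨u, v, huv⟩ : ∃ u v : K, m * u + n * v = 1 := by
      rcases not_and_or.1 hmn with h | h
      · exact ⟨m⁻¹, 0, by simp [h]⟩
      · exact ⟨0, n⁻¹, by simp [h]⟩
    have E : ∀ p : Fin 5 → K, _ := fun p => congrArg (eval p) hg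
    simp [Fin.sum_univ_succ, hG, smul_eval] at E
    have e0 := E ![0,0,0,0,0]
    have e1 := E ![0,0,0,u,v]
    have e2 := E ![0,0,0,-u,-v]
    have huv' : -(m * u) + -(n * v) = -1 := by linear_combination -huv
    clear E hg
    simp [huv, huv'] at e0 e1 e2
    have g2 : g 2 = 0 := e0
    have g1 : g 1 = 0 := by linear_combination (e1 - e2) / 2 - g 1 * huv
    have g0' : g 0 * c = 0 := by linear_combination e1 - g1 - g2 - g 1 * huv
    have g0 : g 0 = 0 := by simpa [hc] using g0'
    intro i
    fin_cases i <;> assumption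

lemma rk_one_dg [CharZero K] (a b c : K) (ha : ¬(a = 0 ∧ b = 0 ∧ c = 0)) (h : b ^ 2 = 4 * a * c) :
    Module.finrank K (LinearMap.range (phiL (qf a b c))) = 3 := by
  by_cases h0 : a = 0
  · subst h0
    have hb : b = 0 := by simpa using h
    subst hb
    apply rk_one_dg' c 0 1
    · simp [qf]
    · simpa using ha
    · simp
  · have h4 : (4 : K) ≠ 0 := by norm_num
    apply rk_one_dg' (4 * a)⁻¹ (2 * a) b
    · have x1 : a = (4 * a)⁻¹ * (2 * a) ^ 2 := by field_simp; norm_num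
      have x2 : b = (4 * a)⁻¹ * (2 * (2 * a) * b) := by field_simp; norm_num
      have x3 : c = (4 * a)⁻¹ * b ^ 2 := by rw [h]; field_simp
      have y1 := congrArg (C (σ := Fin 5)) x1
      have y2 := congrArg (C (σ := Fin 5)) x2
      have y3 := congrArg (C (σ := Fin 5)) x3
      simp only [C_mul, C_pow] at y1 y2 y3
      have hC2 : (C (2 : K) : MvPolynomial (Fin 5) K) = 2 := C2
      simp only [hC2, C4] at y1 y2 y3
      simp only [qf, C_mul, hC2, C4]
      linear_combination X 3 ^ 2 * y1 + X 3 * X 4 * y2 + X 4 ^ 2 * y3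
    · simp [h0]
    · simp [h0]

lemma jt (K : Type*) [Field K] [CharZero K] (a b c : K) (r s : ℕ) (hs : s + 2 * r = 12)
    (hr : Module.finrank K (LinearMap.range (phiL (qf a b c))) = r) :
    IsJordanTypeMult (K := K)
        (Ideal.Quotient.mk (annIdeal (toyPerazzoForm K)) (toyLinForm a b c 0 0))
        (fun k => if k = 2 then r else if k = 1 then s else 0) := by
  have r1 : rkPow (K := K) (Ideal.Quotient.mk (annIdeal (toyPerazzoForm K))
      (toyLinForm a b c 0 0)) 1 = r := by
    rw [rkPow_eq, pow_one, PHI_one, hr]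
  intro k hk
  obtain rfl | rfl | ⟨j, rfl⟩ : k = 1 ∨ k = 2 ∨ ∃ j, k = j + 3 := by
    rcases k with _ | _ | _ | k
    · omega
    · simp
    · simp
    · exact Or.inr (Or.inr ⟨k, rfl⟩)
  · have := rk_two a b c 0
    simp only [Nat.sub_self, rk_zero, r1, zero_add] at this ⊢
    norm_num [this]; omega
  · have h1 := rk_two a b c 0
    have h2 := rk_two a b c 1
    simp only [zero_add] at h1
    norm_num at h2
    norm_num [r1, h1, h2]
  · have h1 := rk_two a b c j
    have h2 := rk_two a b c (j + 1)
    have h3 := rk_two a b c (j + 2)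
    have e : j + 3 - 1 = j + 2 := rfl
    rw [e, h1, h2, h3]
    simp

end Helpers

/-- Example 3.1(c): for `F = X_{2,0}Y_1² + X_{1,1}Y_1Y_2 + X_{0,2}Y_2²` and
`ℓ = a_{2,0}x_{2,0} + a_{1,1}x_{1,1} + a_{0,2}x_{0,2} ≠ 0`, the Jordan type of `ℓ` in
`A_F` is `(2⁴, 1⁴)` if `a_{1,1}² ≠ 4·a_{2,0}·a_{0,2}`, and `(2³, 1⁶)` if
`a_{1,1}² = 4·a_{2,0}·a_{0,2}`. -/
theorem jordanType_toyPerazzo_min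
    (K : Type*) [Field K] [CharZero K] (a20 a11 a02 : K)
    (ha : ¬(a20 = 0 ∧ a11 = 0 ∧ a02 = 0)) :
    (a11 ^ 2 ≠ 4 * a20 * a02 →
      IsJordanTypeMult (K := K)
        (Ideal.Quotient.mk (annIdeal (toyPerazzoForm K)) (toyLinForm a20 a11 a02 0 0))
        (fun k => if k = 2 then 4 else if k = 1 then 4 else 0)) ∧
    (a11 ^ 2 = 4 * a20 * a02 →
      IsJordanTypeMult (K := K)
        (Ideal.Quotient.mk (annIdeal (toyPerazzoForm K)) (toyLinForm a20 a11 a02 0 0))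
        (fun k => if k = 2 then 3 else if k = 1 then 6 else 0)) := by
  exact ⟨fun h => jt K a20 a11 a02 4 4 rfl (rk_one_nd a20 a11 a02 ha h),
    fun h => jt K a20 a11 a02 3 6 rfl (rk_one_dg a20 a11 a02 ha h)⟩
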